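/- Let d ≥ 2 and let f, g : ℝ^d → ℝ be integrable. Suppose that for every nonzero vector v ∈ ℝ^d and Lebesgue-almost every z ∈ ℝ^d one has ∫_ℝ f(z + t v) dt = ∫_ℝ g(z + t v) dt (both integrals being finite for a.e. z). Then f = g almost everywhere. In other words, an integrable function on ℝ^d, d ≥ 2, is uniquely determined by its X-ray transform (its integrals over all straight lines). -/

import Mathlib

/-!
Integrating `f` first along the lines of direction `v` shows that the X-ray transform in direction
`v` determines `∫ k • f` for every bounded function `k` that is constant along those lines, in
particular for every plane wave whose frequency is orthogonal to `v`. If every frequency is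
orthogonal to some direction with known X-ray transform, which is where `2 ≤ d` enters, then all
integrals of `f` against plane waves are known. By Fourier inversion a test function is a
superposition of plane waves, so these integrals determine `f` almost everywhere.
-/

open MeasureTheory

open scoped FourierTransform RealInnerProductSpace SchwartzMap

section LineIntegrals

variable {V F : Type*} [NormedAddCommGroup V] [NormedSpace ℝ V] [NormedAddCommGroup F]
  [NormedSpace ℝ F]

/-- The X-ray transform of `f`: the integral of `f` along the line through `z` with direction `v`.
The vector `v` is not normalized, so scaling `v` by `c ≠ 0` divides the integral by `|c|`. The value
is `0` when `f` is not integrable along the line. -/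
noncomputable def xrayTransform (f : V → F) (v z : V) : F :=
  ∫ t : ℝ, f (z + t • v)

theorem xrayTransform_smul_of_invariant {k : V → ℝ} {v : V}
    (hk : ∀ x (t : ℝ), k (x + t • v) = k x) (f : V → F) (z : V) :
    xrayTransform (fun x ↦ k x • f x) v z = k z • xrayTransform f v z := by
  simp only [xrayTransform, hk, integral_smul]

variable [MeasurableSpace V] [BorelSpace V] [SecondCountableTopology V] {μ : Measure V} [SFinite μ]
  [μ.IsAddRightInvariant]

theorem measurePreserving_prodMk_add_smul {L : StrongDual ℝ V} {v : V} (hLv : L v = 1) :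
    MeasurePreserving (fun p : V × ℝ ↦ (L p.1, p.1 + p.2 • v))
      (μ.prod volume) (volume.prod μ) := by
  have translate : MeasurePreserving (fun p : ℝ × V ↦ (p.1, p.2 + p.1 • v))
      (volume.prod μ) (volume.prod μ) :=
    (MeasurePreserving.id volume).skew_product (g := fun t z ↦ z + t • v)
      (by unfold Function.uncurry; fun_prop) (ae_of_all _ fun _ ↦ map_add_right_eq_self _ _)
  have reflect : MeasurePreserving (fun p : V × ℝ ↦ (p.1, L p.1 - p.2))
      (μ.prod volume) (μ.prod volume) :=
    (MeasurePreserving.id μ).skew_product (g := fun x t ↦ L x - t)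
      (by unfold Function.uncurry; fun_prop)
      (ae_of_all _ fun x ↦ (Measure.measurePreserving_sub_left volume (L x)).map_eq)
  convert Measure.measurePreserving_swap.comp (reflect.comp (Measure.measurePreserving_swap.comp
    (translate.comp Measure.measurePreserving_swap))) using 2 with p
  simp [hLv]

/-- The weight `ψ` only spreads each line integral over the points of its line: without it, every
line would be counted infinitely often as `z` ranges over `V`. -/
theorem integral_eq_integral_smul_xrayTransform {f : V → F} (hf : Integrable f μ)
    {L : StrongDual ℝ V} {v : V} (hLv : L v = 1) {ψ : ℝ → ℝ} (hψ : Integrable ψ)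
    (hψ_one : ∫ s, ψ s = 1) :
    ∫ x, f x ∂μ = ∫ z, ψ (L z) • xrayTransform f v z ∂μ := by
  have shear := measurePreserving_prodMk_add_smul (μ := μ) hLv
  have h_int : Integrable (fun p : ℝ × V ↦ ψ p.1 • f p.2) (volume.prod μ) := hψ.smul_prod hf
  calc ∫ x, f x ∂μ
      = ∫ p : ℝ × V, ψ p.1 • f p.2 ∂volume.prod μ := by
        rw [integral_prod_smul, hψ_one, one_smul]
    _ = ∫ p : V × ℝ, ψ (L p.1) • f (p.1 + p.2 • v) ∂μ.prod volume := by
        conv_lhs => rw [← shear.map_eq]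
        exact integral_map shear.aemeasurable (shear.map_eq.symm ▸ h_int.aestronglyMeasurable)
    _ = ∫ z, (∫ t : ℝ, ψ (L z) • f (z + t • v)) ∂μ :=
        integral_prod _ (shear.integrable_comp_of_integrable h_int)
    _ = ∫ z, ψ (L z) • xrayTransform f v z ∂μ := by
        simp only [integral_smul, xrayTransform]

theorem integral_eq_of_xrayTransform_ae_eq {f g : V → F} (hf : Integrable f μ)
    (hg : Integrable g μ) {v : V} (hv : v ≠ 0)
    (hfg : xrayTransform f v =ᵐ[μ] xrayTransform g v) :
    ∫ x, f x ∂μ = ∫ x, g x ∂μ := by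
  obtain ⟨L, hLv⟩ := SeparatingDual.exists_eq_one (R := ℝ) hv
  have hψ := ProbabilityTheory.integrable_gaussianPDFReal 0 1
  have hψ_one := ProbabilityTheory.integral_gaussianPDFReal_eq_one 0 one_ne_zero
  rw [integral_eq_integral_smul_xrayTransform hf hLv hψ hψ_one,
    integral_eq_integral_smul_xrayTransform hg hLv hψ hψ_one]
  refine integral_congr_ae ?_
  filter_upwards [hfg] with z hz
  rw [hz]

theorem integral_smul_eq_of_xrayTransform_ae_eq {f g : V → F} (hf : Integrable f μ)
    (hg : Integrable g μ) {v : V} (hv : v ≠ 0)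
    (hfg : xrayTransform f v =ᵐ[μ] xrayTransform g v) {k : V → ℝ} {C : ℝ}
    (hk_meas : AEStronglyMeasurable k μ) (hk_bdd : ∀ x, ‖k x‖ ≤ C)
    (hk_inv : ∀ x (t : ℝ), k (x + t • v) = k x) :
    ∫ x, k x • f x ∂μ = ∫ x, k x • g x ∂μ := by
  refine integral_eq_of_xrayTransform_ae_eq (hf.bdd_smul C hk_meas (ae_of_all _ hk_bdd))
    (hg.bdd_smul C hk_meas (ae_of_all _ hk_bdd)) hv ?_
  filter_upwards [hfg] with z hz
  rw [xrayTransform_smul_of_invariant hk_inv, xrayTransform_smul_of_invariant hk_inv, hz]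

end LineIntegrals

section PlaneWaves

variable {V : Type*} [NormedAddCommGroup V] [InnerProductSpace ℝ V]

/-- The real plane wave `x ↦ Re (c * exp (2πi⟪w, x⟫))` with complex amplitude `c` and frequency
`w`. Taking real parts lets it act on functions with values in a real vector space. -/
noncomputable def planeWave (c : ℂ) (w x : V) : ℝ :=
  (c * 𝐞 ⟪w, x⟫).re

theorem norm_planeWave_le (c : ℂ) (w x : V) : ‖planeWave c w x‖ ≤ ‖c‖ :=
  calc ‖planeWave c w x‖ ≤ ‖c * 𝐞 ⟪w, x⟫‖ := Complex.abs_re_le_norm _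
    _ = ‖c‖ := by rw [norm_mul, Circle.norm_coe, mul_one]

theorem planeWave_add_smul_of_inner_eq_zero {w v : V} (hwv : ⟪w, v⟫ = 0) (c : ℂ) (x : V) (t : ℝ) :
    planeWave c w (x + t • v) = planeWave c w x := by
  simp only [planeWave, inner_add_right, real_inner_smul_right, hwv, mul_zero, add_zero]

variable [FiniteDimensional ℝ V] [MeasurableSpace V] [BorelSpace V]

theorem re_eq_integral_planeWave_fourier (φ : 𝓢(V, ℂ)) (x : V) :
    (φ x).re = ∫ w, planeWave (𝓕 φ w) w x := by
  have inversion : φ x = ∫ w, 𝓕 φ w * 𝐞 ⟪w, x⟫ := by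
    conv_lhs => rw [← FourierTransform.fourierInv_fourier_eq (F := 𝓢(V, ℂ)) φ]
    rw [SchwartzMap.fourierInv_coe, Real.fourierInv_eq]
    exact integral_congr_ae (ae_of_all _ fun _ ↦ mul_comm _ _)
  have h_int : Integrable fun w ↦ 𝓕 φ w * 𝐞 ⟪w, x⟫ :=
    (𝓕 φ).integrable.mul_bdd (c := 1) (by fun_prop) (ae_of_all _ fun _ ↦ (Circle.norm_coe _).le)
  rw [inversion]
  exact (integral_re h_int).symm

variable {F : Type*} [NormedAddCommGroup F] [NormedSpace ℝ F] [CompleteSpace F]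
  {μ : Measure V} [SFinite μ]

theorem integral_re_smul_eq_integral_planeWave_smul (φ : 𝓢(V, ℂ)) {f : V → F}
    (hf : Integrable f μ) :
    ∫ x, (φ x).re • f x ∂μ = ∫ w, ∫ x, planeWave (𝓕 φ w) w x • f x ∂μ := by
  have h_int : Integrable (fun p : V × V ↦ planeWave (𝓕 φ p.2) p.2 p.1 • f p.1)
      (μ.prod volume) := by
    have h_bound : Integrable (fun p : V × V ↦ ‖𝓕 φ p.2‖ • ‖f p.1‖) (μ.prod volume) :=
      ((𝓕 φ).integrable.norm.smul_prod hf.norm).swap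
    refine h_bound.mono' (.smul (Continuous.aestronglyMeasurable ?_) hf.1.comp_fst) ?_
    · unfold planeWave
      fun_prop
    · refine ae_of_all _ fun p ↦ ?_
      rw [norm_smul, smul_eq_mul]
      gcongr
      exact norm_planeWave_le _ _ _
  calc ∫ x, (φ x).re • f x ∂μ
      = ∫ x, (∫ w, planeWave (𝓕 φ w) w x • f x) ∂μ := by
        simp only [re_eq_integral_planeWave_fourier, integral_smul_const]
    _ = ∫ w, ∫ x, planeWave (𝓕 φ w) w x • f x ∂μ := integral_integral_swap h_int

theorem ae_eq_of_integral_planeWave_smul_eq {f g : V → F} (hf : Integrable f μ)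
    (hg : Integrable g μ)
    (hfg : ∀ c w, ∫ x, planeWave c w x • f x ∂μ = ∫ x, planeWave c w x • g x ∂μ) :
    f =ᵐ[μ] g := by
  refine ae_eq_of_integral_contDiff_smul_eq hf.locallyIntegrable hg.locallyIntegrable
    fun η hη_smooth hη_supp ↦ ?_
  let φ : 𝓢(V, ℂ) := HasCompactSupport.toSchwartzMap
    (hη_supp.comp_left Complex.ofReal_zero) (Complex.ofRealCLM.contDiff.comp hη_smooth)
  calc ∫ x, η x • f x ∂μ
      = ∫ w, ∫ x, planeWave (𝓕 φ w) w x • f x ∂μ :=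
        integral_re_smul_eq_integral_planeWave_smul φ hf
    _ = ∫ w, ∫ x, planeWave (𝓕 φ w) w x • g x ∂μ := by simp only [hfg]
    _ = ∫ x, η x • g x ∂μ := (integral_re_smul_eq_integral_planeWave_smul φ hg).symm

end PlaneWaves

theorem exists_ne_zero_inner_eq_zero {V : Type*} [NormedAddCommGroup V] [InnerProductSpace ℝ V]
    [FiniteDimensional ℝ V] (hV : 2 ≤ Module.finrank ℝ V) (w : V) :
    ∃ v : V, v ≠ 0 ∧ ⟪w, v⟫ = 0 := by
  have h_ker : (innerₗ V w).ker ≠ ⊥ :=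
    LinearMap.ker_ne_bot_of_finrank_lt (by rw [Module.finrank_self]; lia)
  obtain ⟨v, hwv, hv⟩ := Submodule.exists_mem_ne_zero_of_ne_bot h_ker
  exact ⟨v, hv, hwv⟩

theorem xray_transform_injective_general {V F : Type*} [NormedAddCommGroup V]
    [InnerProductSpace ℝ V] [FiniteDimensional ℝ V] [MeasurableSpace V] [BorelSpace V]
    [NormedAddCommGroup F] [NormedSpace ℝ F] [CompleteSpace F] {f g : V → F}
    (hf : Integrable f) (hg : Integrable g)
    (h : ∀ w : V, ∃ v, v ≠ 0 ∧ ⟪w, v⟫ = 0 ∧ xrayTransform f v =ᵐ[volume] xrayTransform g v) :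
    f =ᵐ[volume] g := by
  refine ae_eq_of_integral_planeWave_smul_eq hf hg fun c w ↦ ?_
  obtain ⟨v, hv, hwv, hfg⟩ := h w
  exact integral_smul_eq_of_xrayTransform_ae_eq hf hg hv hfg
    (by unfold planeWave; fun_prop) (norm_planeWave_le c w)
    (planeWave_add_smul_of_inner_eq_zero hwv c)

/-- An integrable function on `ℝ^d`, `d ≥ 2`, is uniquely determined (a.e.) by
its X-ray transform: if `f` and `g` are integrable and for every nonzero
direction `v` their integrals over almost every line with direction `v`
coincide, then `f = g` almost everywhere. -/
theorem xray_transform_injective {d : ℕ} (hd : 2 ≤ d)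
    (f g : EuclideanSpace ℝ (Fin d) → ℝ)
    (hf : Integrable f) (hg : Integrable g)
    (h : ∀ v : EuclideanSpace ℝ (Fin d), v ≠ 0 →
      ∀ᵐ z : EuclideanSpace ℝ (Fin d),
        (∫ t : ℝ, f (z + t • v)) = ∫ t : ℝ, g (z + t • v)) :
    f =ᵐ[volume] g := by
  refine xray_transform_injective_general hf hg fun w ↦ ?_
  obtain ⟨v, hv, hwv⟩ := exists_ne_zero_inner_eq_zero (by simpa using hd) w
  exact ⟨v, hv, hwv, h v hv⟩
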